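/- Let ℓ ∈ 𝕃 and let A ∈ ℝ^{m×n} have every entry in [−1,1]. Let λ ∈ ℝⁿ, let v = s·e_j (s ∈ {±1}) satisfy ∇L(Aλ)ᵀAv = −‖Aᵀ∇L(Aλ)‖_∞, set γ̂ := ‖Aᵀ∇L(Aλ)‖_∞/‖∇L(Aλ)‖₁ and C := C_ℓ(ℓ⁻¹(m·L(Aλ))), and let α* ≥ 0 be a minimizer of α ↦ L(A(λ + α·v)). Then for any ν ∈ (0,1], every step α with ν·γ̂/C⁴ ≤ α ≤ ν·α* satisfies L(A(λ + α·v)) ≤ L(Aλ)·exp(−ν(2−ν)·γ̂²/(2C⁶)). -/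

import Mathlib

open Real Finset

noncomputable section

/-- The property that `C` is a valid curvature constant at level `z`:
`C ≥ 1` and `C⁻¹ ≤ eˣ / ℓ⁽ⁱ⁾(x) ≤ C` for all `x ≤ z` and `i ∈ {0,1,2}`. -/
def CBound (ℓ : ℝ → ℝ) (z C : ℝ) : Prop :=
  1 ≤ C ∧ ∀ x ≤ z, ∀ i ≤ 2,
    C⁻¹ ≤ Real.exp x / iteratedDeriv i ℓ x ∧ Real.exp x / iteratedDeriv i ℓ x ≤ C

/-- `C_ℓ(z)`: the least valid curvature constant at level `z`. -/
def Cconst (ℓ : ℝ → ℝ) (z : ℝ) : ℝ := sInf {C : ℝ | CBound ℓ z C}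

/-- Membership in the class `𝕃`: positive, twice continuously differentiable,
strictly convex, and `C_ℓ(z) < ∞` (i.e. some valid constant exists) for every `z`. -/
def MemL (ℓ : ℝ → ℝ) : Prop :=
  (∀ x, 0 < ℓ x) ∧ ContDiff ℝ 2 ℓ ∧ StrictConvexOn ℝ Set.univ ℓ ∧
    ∀ z : ℝ, ∃ C : ℝ, CBound ℓ z C

/-- Membership in `𝕃_∞`: in `𝕃` and moreover `C_ℓ(z) → 1` as `z → −∞`. -/
def MemLinf (ℓ : ℝ → ℝ) : Prop :=
  MemL ℓ ∧ Filter.Tendsto (Cconst ℓ) Filter.atBot (nhds 1)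

variable {m n : ℕ}

/-- The empirical risk `L(Aλ) = (1/m) Σᵢ ℓ((Aλ)ᵢ)`. -/
def LL (ℓ : ℝ → ℝ) (A : Matrix (Fin m) (Fin n) ℝ) (lam : Fin n → ℝ) : ℝ :=
  (∑ i, ℓ (A.mulVec lam i)) / m

/-- The gradient vector `∇L(Aλ)`, with `i`-th entry `ℓ'((Aλ)ᵢ)/m`. -/
def gradL (ℓ : ℝ → ℝ) (A : Matrix (Fin m) (Fin n) ℝ) (lam : Fin n → ℝ) : Fin m → ℝ :=
  fun i => deriv ℓ (A.mulVec lam i) / m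

/-- `‖Aᵀ ∇L(Aλ)‖_∞`. -/
def gInf (ℓ : ℝ → ℝ) (A : Matrix (Fin m) (Fin n) ℝ) (lam : Fin n → ℝ) : ℝ :=
  ⨆ j : Fin n, |∑ i, gradL ℓ A lam i * A i j|

/-- `‖∇L(Aλ)‖₁`. -/
def gOne (ℓ : ℝ → ℝ) (A : Matrix (Fin m) (Fin n) ℝ) (lam : Fin n → ℝ) : ℝ :=
  ∑ i, |gradL ℓ A lam i|

/-- `γ̂ = ‖Aᵀ∇L(Aλ)‖_∞ / ‖∇L(Aλ)‖₁`. -/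
def gammaHat (ℓ : ℝ → ℝ) (A : Matrix (Fin m) (Fin n) ℝ) (lam : Fin n → ℝ) : ℝ :=
  gInf ℓ A lam / gOne ℓ A lam

/-- `C = C_ℓ(ℓ⁻¹(m · L(Aλ)))`. -/
def Cstep (ℓ : ℝ → ℝ) (A : Matrix (Fin m) (Fin n) ℝ) (lam : Fin n → ℝ) : ℝ :=
  Cconst ℓ (Function.invFun ℓ ((m : ℝ) * LL ℓ A lam))

/-- The (minimum `l¹`) margin `M(Aλ) = min_k (−(Aλ)_k) / ‖λ‖₁`. -/
def margin (A : Matrix (Fin m) (Fin n) ℝ) (lam : Fin n → ℝ) : ℝ :=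
  ⨅ k : Fin m, (-(A.mulVec lam k)) / (∑ j, |lam j|)

/-- The maximum margin `γ = max_{‖λ‖₁=1} min_i (−(Aλ)ᵢ)`. -/
def gammaMax (A : Matrix (Fin m) (Fin n) ℝ) : ℝ :=
  sSup {r : ℝ | ∃ lam : Fin n → ℝ, (∑ j, |lam j|) = 1 ∧ r = ⨅ i : Fin m, -(A.mulVec lam i)}

/-- Boosting iterates: `λ₀ = 0`, `λ_t = λ_{t-1} + α_t • v_t` where `v_t` is a signed
standard basis vector satisfying `∇L(Aλ_{t-1})ᵀ A v_t = −‖Aᵀ∇L(Aλ_{t-1})‖_∞`. -/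
def IsBoostSeq (ℓ : ℝ → ℝ) (A : Matrix (Fin m) (Fin n) ℝ)
    (lam : ℕ → Fin n → ℝ) (α : ℕ → ℝ) (v : ℕ → Fin n → ℝ) : Prop :=
  lam 0 = 0 ∧
  (∀ t : ℕ, 1 ≤ t → lam t = lam (t-1) + α t • v t) ∧
  (∀ t : ℕ, 1 ≤ t → ∃ s : ℝ, (s = 1 ∨ s = -1) ∧ ∃ j : Fin n, v t = s • (Pi.single j (1:ℝ) : Fin n → ℝ)) ∧
  (∀ t : ℕ, 1 ≤ t →
    ∑ i, gradL ℓ A (lam (t-1)) i * A.mulVec (v t) i = - gInf ℓ A (lam (t-1)))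

/-- The quantity `Υ_ν(γ)`. -/
def Upsilon (ν γ : ℝ) : ℝ :=
  ((2/ν) * Real.log 2 - (2/ν) * Real.log ((1+γ) ^ (1-ν) + (1-γ) ^ (1-ν))
      - Real.log (1-γ^2)) /
    (Real.log (1+γ) - Real.log (1-γ))

/-! The idea: along the ray `t ↦ λ + t v` the loss stays below `L(Aλ)` up to the minimizer `α*`, by
convexity, so no coordinate of `A(λ + t v)` exceeds `z = ℓ⁻¹(m L(Aλ))`. Below the level `z` the
functions `ℓ`, `ℓ'` and `ℓ''` are within a factor `C²` of each other, since all are within a factor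
`C` of `exp`. Hence the slope at `0` is at most `-(γ̂/C²) L(Aλ)`, the second derivative is at most
`C² L(Aλ)`, and the quadratic upper bound at `t = ν γ̂/C⁴` is `L(Aλ) (1 - ν(2-ν)γ̂²/(2C⁶))`. From
there up to `α*` the loss only decreases. -/

section RealFunctions

theorem le_quadratic_of_deriv_deriv_le {f f' f'' : ℝ → ℝ} {a b K : ℝ} (hab : a ≤ b)
    (hf : ∀ t ∈ Set.Icc a b, HasDerivWithinAt f (f' t) (Set.Icc a b) t)
    (hf' : ∀ t ∈ Set.Icc a b, HasDerivWithinAt f' (f'' t) (Set.Icc a b) t)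
    (hK : ∀ t ∈ Set.Ico a b, f'' t ≤ K) :
    f b ≤ f a + f' a * (b - a) + K / 2 * (b - a) ^ 2 := by
  have hasDerivWithinAt_Ici {g g' : ℝ → ℝ}
      (hg : ∀ t ∈ Set.Icc a b, HasDerivWithinAt g (g' t) (Set.Icc a b) t) :
      ∀ t ∈ Set.Ico a b, HasDerivWithinAt g (g' t) (Set.Ici t) t := fun t ht ↦
    (hg t (Set.Ico_subset_Icc_self ht)).mono_of_mem_nhdsWithin (Icc_mem_nhdsGE_of_mem ht)
  have linear_deriv (t : ℝ) : HasDerivAt (fun t ↦ f' a + K * (t - a)) K t := by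
    simpa using (((hasDerivAt_id' t).sub_const a).const_mul K).const_add (f' a)
  have quadratic_deriv (t : ℝ) :
      HasDerivAt (fun t ↦ f a + f' a * (t - a) + K / 2 * (t - a) ^ 2) (f' a + K * (t - a)) t := by
    have hsub := (hasDerivAt_id' t).sub_const a
    refine (((hsub.const_mul (f' a)).const_add (f a)).fun_add
      ((hsub.fun_pow 2).const_mul (K / 2))).congr_deriv ?_
    push_cast
    ring
  have deriv_le : ∀ ⦃t⦄, t ∈ Set.Icc a b → f' t ≤ f' a + K * (t - a) :=
    image_le_of_deriv_right_le_deriv_boundary (fun t ht ↦ (hf' t ht).continuousWithinAt)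
      (hasDerivWithinAt_Ici hf') (by simp)
      (fun t _ ↦ (linear_deriv t).continuousAt.continuousWithinAt)
      (fun t _ ↦ (linear_deriv t).hasDerivWithinAt) hK
  exact image_le_of_deriv_right_le_deriv_boundary (fun t ht ↦ (hf t ht).continuousWithinAt)
    (hasDerivWithinAt_Ici hf) (by simp)
    (fun t _ ↦ (quadratic_deriv t).continuousAt.continuousWithinAt)
    (fun t _ ↦ (quadratic_deriv t).hasDerivWithinAt)
    (fun t ht ↦ deriv_le (Set.Ico_subset_Icc_self ht)) (Set.right_mem_Icc.2 hab)

/-- The point `a / b` minimizes the quadratic `1 - a t + b t² / 2`, and `ν` relaxes that step. -/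
theorem le_mul_exp_of_deriv_deriv_le {f f' f'' : ℝ → ℝ} {a b ν : ℝ} (hb : 0 < b)
    (hT : 0 ≤ ν * (a / b)) (hf₀ : 0 ≤ f 0)
    (hf : ∀ t ∈ Set.Icc 0 (ν * (a / b)), HasDerivWithinAt f (f' t) (Set.Icc 0 (ν * (a / b))) t)
    (hf' : ∀ t ∈ Set.Icc 0 (ν * (a / b)), HasDerivWithinAt f' (f'' t) (Set.Icc 0 (ν * (a / b))) t)
    (h₁ : f' 0 ≤ -(a * f 0)) (h₂ : ∀ t ∈ Set.Ico 0 (ν * (a / b)), f'' t ≤ b * f 0) :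
    f (ν * (a / b)) ≤ f 0 * exp (-(ν * (2 - ν) * a ^ 2 / (2 * b))) := by
  calc f (ν * (a / b))
      ≤ f 0 + f' 0 * (ν * (a / b)) + b * f 0 / 2 * (ν * (a / b)) ^ 2 := by
        simpa only [sub_zero] using le_quadratic_of_deriv_deriv_le hT hf hf' h₂
    _ ≤ f 0 + -(a * f 0) * (ν * (a / b)) + b * f 0 / 2 * (ν * (a / b)) ^ 2 := by gcongr
    _ = f 0 * (-(ν * (2 - ν) * a ^ 2 / (2 * b)) + 1) := by field_simp; ring
    _ ≤ f 0 * exp (-(ν * (2 - ν) * a ^ 2 / (2 * b))) := by gcongr; exact add_one_le_exp _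

theorem antitoneOn_Icc_of_convexOn_of_isMinOn {𝕜 : Type*} [Field 𝕜] [LinearOrder 𝕜]
    [IsStrictOrderedRing 𝕜] {f : 𝕜 → 𝕜} {a b : 𝕜} (hf : ConvexOn 𝕜 (Set.Icc a b) f)
    (hmin : IsMinOn f (Set.Icc a b) b) :
    AntitoneOn f (Set.Icc a b) := by
  intro p hp q hq hpq
  calc f q ≤ max (f p) (f b) :=
        hf.le_max_of_mem_Icc hp (Set.right_mem_Icc.2 (hp.1.trans hp.2)) ⟨hpq, hq.2⟩
    _ = f p := max_eq_left (hmin hp)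

theorem tendsto_atTop_of_convexOn_of_hasDerivAt_pos {f : ℝ → ℝ} {f' x : ℝ}
    (hf : ConvexOn ℝ Set.univ f) (hx : HasDerivAt f f' x) (hf' : 0 < f') :
    Filter.Tendsto f Filter.atTop Filter.atTop := by
  have tangent_le : ∀ᶠ y in Filter.atTop, f' * (y - x) + f x ≤ f y := by
    filter_upwards [Filter.eventually_gt_atTop x] with y hxy
    have := hf.le_slope_of_hasDerivAt (Set.mem_univ x) (Set.mem_univ y) hxy hx
    rw [slope_def_field, le_div_iff₀ (sub_pos.2 hxy)] at this
    linarith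
  refine Filter.tendsto_atTop_mono' _ tangent_le (Filter.tendsto_atTop_add_const_right _ _ ?_)
  exact (Filter.tendsto_atTop_add_const_right _ (-x) Filter.tendsto_id).const_mul_atTop hf'

end RealFunctions

namespace CBound

variable {ℓ : ℝ → ℝ} {z C x : ℝ} {i k : ℕ}

theorem pos (h : CBound ℓ z C) : 0 < C :=
  one_pos.trans_le h.1

theorem iteratedDeriv_pos (h : CBound ℓ z C) (hx : x ≤ z) (hi : i ≤ 2) :
    0 < iteratedDeriv i ℓ x := by
  have : 0 < exp x / iteratedDeriv i ℓ x := (inv_pos.2 h.pos).trans_le (h.2 x hx i hi).1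
  exact (div_pos_iff_of_pos_left (exp_pos x)).1 this

theorem iteratedDeriv_le (h : CBound ℓ z C) (hx : x ≤ z) (hi : i ≤ 2) :
    iteratedDeriv i ℓ x ≤ C * exp x := by
  have := (h.2 x hx i hi).1
  rwa [le_div_iff₀ (h.iteratedDeriv_pos hx hi), inv_mul_le_iff₀ h.pos] at this

theorem exp_le (h : CBound ℓ z C) (hx : x ≤ z) (hi : i ≤ 2) :
    exp x ≤ C * iteratedDeriv i ℓ x :=
  (div_le_iff₀ (h.iteratedDeriv_pos hx hi)).1 (h.2 x hx i hi).2

theorem iteratedDeriv_le_sq_mul (h : CBound ℓ z C) (hx : x ≤ z) (hi : i ≤ 2) (hk : k ≤ 2) :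
    iteratedDeriv i ℓ x ≤ C ^ 2 * iteratedDeriv k ℓ x :=
  calc iteratedDeriv i ℓ x ≤ C * exp x := h.iteratedDeriv_le hx hi
    _ ≤ C * (C * iteratedDeriv k ℓ x) := mul_le_mul_of_nonneg_left (h.exp_le hx hk) h.pos.le
    _ = C ^ 2 * iteratedDeriv k ℓ x := by ring

end CBound

namespace MemL

variable {ℓ : ℝ → ℝ}

theorem cBound_Cconst (hℓ : MemL ℓ) (z : ℝ) : CBound ℓ z (Cconst ℓ z) := by
  obtain ⟨C₀, hC₀⟩ := hℓ.2.2.2 z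
  have hne : {C : ℝ | CBound ℓ z C}.Nonempty := ⟨C₀, hC₀⟩
  refine ⟨le_csInf hne fun C hC ↦ hC.1, fun x hx i hi ↦ ⟨?_, ?_⟩⟩
  · have hquot : 0 < exp x / iteratedDeriv i ℓ x :=
      div_pos (exp_pos x) (hC₀.iteratedDeriv_pos hx hi)
    exact inv_le_of_inv_le₀ hquot <|
      le_csInf hne fun C hC ↦ inv_le_of_inv_le₀ hC.pos (hC.2 x hx i hi).1
  · exact le_csInf hne fun C hC ↦ (hC.2 x hx i hi).2

theorem hasDerivAt (hℓ : MemL ℓ) (x : ℝ) : HasDerivAt ℓ (deriv ℓ x) x :=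
  (hℓ.2.1.differentiable two_ne_zero x).hasDerivAt

theorem deriv_pos (hℓ : MemL ℓ) (x : ℝ) : 0 < deriv ℓ x := by
  simpa only [iteratedDeriv_one] using
    (hℓ.cBound_Cconst x).iteratedDeriv_pos le_rfl one_le_two

theorem strictMono (hℓ : MemL ℓ) : StrictMono ℓ :=
  strictMono_of_deriv_pos hℓ.deriv_pos

theorem tendsto_atTop (hℓ : MemL ℓ) : Filter.Tendsto ℓ Filter.atTop Filter.atTop :=
  tendsto_atTop_of_convexOn_of_hasDerivAt_pos hℓ.2.2.1.convexOn (hℓ.hasDerivAt 0) (hℓ.deriv_pos 0)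

theorem tendsto_atBot (hℓ : MemL ℓ) : Filter.Tendsto ℓ Filter.atBot (nhds 0) := by
  have le_exp : ∀ᶠ x in Filter.atBot, ℓ x ≤ Cconst ℓ 0 * exp x := by
    filter_upwards [Filter.eventually_le_atBot 0] with x hx
    simpa only [iteratedDeriv_zero] using (hℓ.cBound_Cconst 0).iteratedDeriv_le hx zero_le_two
  refine squeeze_zero' (.of_forall fun x ↦ (hℓ.1 x).le) le_exp ?_
  simpa only [mul_zero] using tendsto_exp_atBot.const_mul (Cconst ℓ 0)

theorem apply_invFun (hℓ : MemL ℓ) {y : ℝ} (hy : 0 < y) : ℓ (Function.invFun ℓ y) = y :=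
  Function.invFun_eq <| mem_range_of_exists_le_of_exists_ge hℓ.2.1.continuous
    (hℓ.tendsto_atBot.eventually_le_const hy).exists (hℓ.tendsto_atTop.eventually_ge_atTop y).exists

end MemL

/-- The second derivative `vᵀ Aᵀ ∇²L(Aλ) A v` of the empirical risk at `λ` in the direction `v`,
used to bound the curvature of `t ↦ L(A(λ + t v))`. The Hessian of `L` being diagonal, it is
encoded as a sum over the examples. -/
def hessL (ℓ : ℝ → ℝ) (A : Matrix (Fin m) (Fin n) ℝ) (lam v : Fin n → ℝ) : ℝ :=
  (∑ i, iteratedDeriv 2 ℓ (A.mulVec lam i) * A.mulVec v i ^ 2) / m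

section EmpiricalRisk

variable {ℓ : ℝ → ℝ} {A : Matrix (Fin m) (Fin n) ℝ} {lam lam' v : Fin n → ℝ}

theorem natCast_mul_LL (hm : 0 < m) : m * LL ℓ A lam = ∑ i, ℓ (A.mulVec lam i) :=
  mul_div_cancel₀ _ (Nat.cast_ne_zero.2 hm.ne')

theorem LL_pos (hm : 0 < m) (hℓ : ∀ x, 0 < ℓ x) : 0 < LL ℓ A lam :=
  div_pos (sum_pos (fun _ _ ↦ hℓ _) ⟨⟨0, hm⟩, mem_univ _⟩) (Nat.cast_pos.2 hm)

theorem apply_mulVec_le_natCast_mul_LL (hℓ : ∀ x, 0 ≤ ℓ x) (i : Fin m) :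
    ℓ (A.mulVec lam i) ≤ m * LL ℓ A lam := by
  rw [natCast_mul_LL i.pos]
  exact single_le_sum (f := fun i ↦ ℓ (A.mulVec lam i)) (fun _ _ ↦ hℓ _) (mem_univ i)

theorem convexOn_LL (hℓ : ConvexOn ℝ Set.univ ℓ) : ConvexOn ℝ Set.univ (LL ℓ A) := by
  refine ⟨convex_univ, fun p _ q _ a b ha hb hab ↦ ?_⟩
  simp only [LL, Matrix.mulVec_add, Matrix.mulVec_smul, smul_eq_mul, mul_div_assoc', ← add_div,
    mul_sum, ← sum_add_distrib]
  gcongr with i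
  exact hℓ.2 (Set.mem_univ _) (Set.mem_univ _) ha hb hab

theorem convexOn_LL_add_smul (hℓ : ConvexOn ℝ Set.univ ℓ) {s : Set ℝ} (hs : Convex ℝ s) :
    ConvexOn ℝ s fun t ↦ LL ℓ A (lam + t • v) := by
  have := ((convexOn_LL (A := A) hℓ).translate_right lam).comp_linearMap
    (LinearMap.toSpanSingleton ℝ (Fin n → ℝ) v)
  exact this.subset (Set.subset_univ s) hs

theorem hasDerivAt_mulVec_add_smul (i : Fin m) (t : ℝ) :
    HasDerivAt (fun t : ℝ ↦ A.mulVec (lam + t • v) i) (A.mulVec v i) t := by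
  simpa [Matrix.mulVec_add, Matrix.mulVec_smul] using
    ((hasDerivAt_id t).mul_const (A.mulVec v i)).const_add (A.mulVec lam i)

theorem hasDerivAt_LL_add_smul (hℓ : Differentiable ℝ ℓ) (t : ℝ) :
    HasDerivAt (fun t : ℝ ↦ LL ℓ A (lam + t • v))
      (∑ i, gradL ℓ A (lam + t • v) i * A.mulVec v i) t := by
  refine ((HasDerivAt.fun_sum fun i _ ↦ (hℓ _).hasDerivAt.comp t
    (hasDerivAt_mulVec_add_smul i t)).div_const (m : ℝ)).congr_deriv ?_
  simp only [gradL, sum_div, div_mul_eq_mul_div]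

theorem hasDerivAt_sum_gradL_add_smul (hℓ : ContDiff ℝ 2 ℓ) (t : ℝ) :
    HasDerivAt (fun t : ℝ ↦ ∑ i, gradL ℓ A (lam + t • v) i * A.mulVec v i)
      (hessL ℓ A (lam + t • v) v) t := by
  refine (HasDerivAt.fun_sum fun i _ ↦ (((hℓ.differentiable_deriv_two _).hasDerivAt.comp t
    (hasDerivAt_mulVec_add_smul i t)).div_const (m : ℝ)).mul_const (A.mulVec v i)).congr_deriv ?_
  rw [hessL, sum_div]
  refine sum_congr rfl fun i _ ↦ ?_
  rw [iteratedDeriv_succ, iteratedDeriv_one]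
  ring

theorem abs_mulVec_smul_single_le (hA : ∀ i j, |A i j| ≤ 1) {s : ℝ} (hs : |s| ≤ 1) (j : Fin n)
    (i : Fin m) : |A.mulVec (s • Pi.single j 1) i| ≤ 1 := by
  rw [Matrix.mulVec_smul, Matrix.mulVec_single_one, Pi.smul_apply, Matrix.col_apply, smul_eq_mul,
    abs_mul]
  exact mul_le_one₀ hs (abs_nonneg _) (hA i j)

theorem mulVec_le_invFun (hℓ : MemL ℓ) (hle : LL ℓ A lam' ≤ LL ℓ A lam) (i : Fin m) :
    A.mulVec lam' i ≤ Function.invFun ℓ (m * LL ℓ A lam) := by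
  have hlevel : 0 < m * LL ℓ A lam := mul_pos (Nat.cast_pos.2 i.pos) (LL_pos i.pos hℓ.1)
  rw [← hℓ.strictMono.le_iff_le, hℓ.apply_invFun hlevel]
  calc ℓ (A.mulVec lam' i)
      ≤ m * LL ℓ A lam' := apply_mulVec_le_natCast_mul_LL (fun x ↦ (hℓ.1 x).le) i
    _ ≤ m * LL ℓ A lam := by gcongr

theorem Cstep_pos (hℓ : MemL ℓ) : 0 < Cstep ℓ A lam :=
  (hℓ.cBound_Cconst _).pos

theorem iteratedDeriv_mulVec_le (hℓ : MemL ℓ) (hle : LL ℓ A lam' ≤ LL ℓ A lam) {k l : ℕ}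
    (hk : k ≤ 2) (hl : l ≤ 2) (i : Fin m) :
    iteratedDeriv k ℓ (A.mulVec lam' i) ≤ Cstep ℓ A lam ^ 2 * iteratedDeriv l ℓ (A.mulVec lam' i) :=
  (hℓ.cBound_Cconst _).iteratedDeriv_le_sq_mul (mulVec_le_invFun hℓ hle i) hk hl

theorem hessL_le (hℓ : MemL ℓ) (hv : ∀ i, |A.mulVec v i| ≤ 1) (hle : LL ℓ A lam' ≤ LL ℓ A lam) :
    hessL ℓ A lam' v ≤ Cstep ℓ A lam ^ 2 * LL ℓ A lam' := by
  rw [hessL, LL, mul_div_assoc', mul_sum]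
  refine div_le_div_of_nonneg_right (sum_le_sum fun i _ ↦ ?_) m.cast_nonneg
  have hpos : 0 < iteratedDeriv 2 ℓ (A.mulVec lam' i) :=
    (hℓ.cBound_Cconst _).iteratedDeriv_pos le_rfl le_rfl
  calc iteratedDeriv 2 ℓ (A.mulVec lam' i) * A.mulVec v i ^ 2
      ≤ iteratedDeriv 2 ℓ (A.mulVec lam' i) :=
        mul_le_of_le_one_right hpos.le ((sq_le_one_iff_abs_le_one _).2 (hv i))
    _ ≤ Cstep ℓ A lam ^ 2 * ℓ (A.mulVec lam' i) := by
        simpa only [iteratedDeriv_zero] using iteratedDeriv_mulVec_le hℓ hle le_rfl zero_le_two i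

theorem LL_le_sq_mul_gOne (hℓ : MemL ℓ) : LL ℓ A lam ≤ Cstep ℓ A lam ^ 2 * gOne ℓ A lam := by
  rw [LL, gOne, sum_div, mul_sum]
  gcongr with i
  rw [gradL, abs_of_nonneg (div_nonneg (hℓ.deriv_pos _).le m.cast_nonneg), mul_div_assoc']
  gcongr
  simpa only [iteratedDeriv_zero, iteratedDeriv_one] using
    iteratedDeriv_mulVec_le hℓ le_rfl zero_le_two one_le_two i

theorem gOne_pos (hm : 0 < m) (hℓ : MemL ℓ) : 0 < gOne ℓ A lam :=
  pos_of_mul_pos_right ((LL_pos hm hℓ.1).trans_le (LL_le_sq_mul_gOne hℓ)) (sq_nonneg _)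

theorem gammaHat_nonneg : 0 ≤ gammaHat ℓ A lam :=
  div_nonneg (iSup_nonneg fun _ ↦ abs_nonneg _) (sum_nonneg fun _ _ ↦ abs_nonneg _)

theorem gammaHat_div_mul_LL_le_gInf (hm : 0 < m) (hℓ : MemL ℓ) :
    gammaHat ℓ A lam / Cstep ℓ A lam ^ 2 * LL ℓ A lam ≤ gInf ℓ A lam := by
  have hC : 0 < Cstep ℓ A lam := Cstep_pos hℓ
  have hγ : 0 ≤ gammaHat ℓ A lam := gammaHat_nonneg
  calc gammaHat ℓ A lam / Cstep ℓ A lam ^ 2 * LL ℓ A lam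
      ≤ gammaHat ℓ A lam / Cstep ℓ A lam ^ 2 * (Cstep ℓ A lam ^ 2 * gOne ℓ A lam) := by
        gcongr; exact LL_le_sq_mul_gOne hℓ
    _ = gammaHat ℓ A lam * gOne ℓ A lam := by field_simp
    _ = gInf ℓ A lam := div_mul_cancel₀ _ (gOne_pos hm hℓ).ne'

theorem LL_add_smul_le_mul_exp (hm : 0 < m) (hℓ : MemL ℓ) (hv : ∀ i, |A.mulVec v i| ≤ 1)
    (hvgrad : ∑ i, gradL ℓ A lam i * A.mulVec v i ≤ -gInf ℓ A lam) {ν : ℝ} (hν : 0 ≤ ν)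
    (hlevel : ∀ t ∈ Set.Ico 0 (ν * (gammaHat ℓ A lam / Cstep ℓ A lam ^ 4)),
      LL ℓ A (lam + t • v) ≤ LL ℓ A lam) :
    LL ℓ A (lam + (ν * (gammaHat ℓ A lam / Cstep ℓ A lam ^ 4)) • v) ≤
      LL ℓ A lam * exp (-(ν * (2 - ν) * gammaHat ℓ A lam ^ 2 / (2 * Cstep ℓ A lam ^ 6))) := by
  have hC : 0 < Cstep ℓ A lam := Cstep_pos hℓ
  have hγ : 0 ≤ gammaHat ℓ A lam := gammaHat_nonneg
  have hstep : gammaHat ℓ A lam / Cstep ℓ A lam ^ 4 =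
      gammaHat ℓ A lam / Cstep ℓ A lam ^ 2 / Cstep ℓ A lam ^ 2 := by field_simp
  have hrate : ν * (2 - ν) * gammaHat ℓ A lam ^ 2 / (2 * Cstep ℓ A lam ^ 6) =
      ν * (2 - ν) * (gammaHat ℓ A lam / Cstep ℓ A lam ^ 2) ^ 2 / (2 * Cstep ℓ A lam ^ 2) := by
    field_simp
  have hslope : ∑ i, gradL ℓ A lam i * A.mulVec v i ≤
      -(gammaHat ℓ A lam / Cstep ℓ A lam ^ 2 * LL ℓ A lam) :=
    hvgrad.trans (neg_le_neg (gammaHat_div_mul_LL_le_gInf hm hℓ))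
  have hcurv : ∀ t ∈ Set.Ico 0 (ν * (gammaHat ℓ A lam / Cstep ℓ A lam ^ 4)),
      hessL ℓ A (lam + t • v) v ≤ Cstep ℓ A lam ^ 2 * LL ℓ A lam := fun t ht ↦
    (hessL_le hℓ hv (hlevel t ht)).trans <| by gcongr; exact hlevel t ht
  rw [hstep] at hcurv ⊢
  rw [hrate]
  have hbound := le_mul_exp_of_deriv_deriv_le (f := fun t ↦ LL ℓ A (lam + t • v))
    (f' := fun t ↦ ∑ i, gradL ℓ A (lam + t • v) i * A.mulVec v i) (ν := ν)
    (a := gammaHat ℓ A lam / Cstep ℓ A lam ^ 2) (b := Cstep ℓ A lam ^ 2)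
    (pow_pos hC 2) (by positivity) (LL_pos hm hℓ.1).le
    (fun t _ ↦ (hasDerivAt_LL_add_smul (hℓ.2.1.differentiable two_ne_zero) t).hasDerivWithinAt)
    (fun t _ ↦ (hasDerivAt_sum_gradL_add_smul hℓ.2.1 t).hasDerivWithinAt)
  simp only [zero_smul, add_zero] at hbound
  exact hbound hslope hcurv

end EmpiricalRisk

theorem single_step_improvement_general (hm : 0 < m) (A : Matrix (Fin m) (Fin n) ℝ)
    (ℓ : ℝ → ℝ) (hℓ : MemL ℓ) (lam v : Fin n → ℝ) (hv : ∀ i, |A.mulVec v i| ≤ 1)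
    (hvgrad : ∑ i, gradL ℓ A lam i * A.mulVec v i ≤ -gInf ℓ A lam)
    (αs : ℝ) (hmin : IsMinOn (fun β ↦ LL ℓ A (lam + β • v)) (Set.Icc 0 αs) αs)
    (ν : ℝ) (hν : 0 ≤ ν) (α : ℝ)
    (hα₁ : ν * (gammaHat ℓ A lam / Cstep ℓ A lam ^ 4) ≤ α) (hα₂ : α ≤ αs) :
    LL ℓ A (lam + α • v) ≤
      LL ℓ A lam * exp (-(ν * (2 - ν) * gammaHat ℓ A lam ^ 2 / (2 * Cstep ℓ A lam ^ 6))) := by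
  have hT : 0 ≤ ν * (gammaHat ℓ A lam / Cstep ℓ A lam ^ 4) :=
    mul_nonneg hν (div_nonneg gammaHat_nonneg (pow_pos (Cstep_pos hℓ) 4).le)
  have hanti : AntitoneOn (fun β ↦ LL ℓ A (lam + β • v)) (Set.Icc 0 αs) :=
    antitoneOn_Icc_of_convexOn_of_isMinOn
      (convexOn_LL_add_smul hℓ.2.2.1.convexOn (convex_Icc 0 αs)) hmin
  calc LL ℓ A (lam + α • v)
      ≤ LL ℓ A (lam + (ν * (gammaHat ℓ A lam / Cstep ℓ A lam ^ 4)) • v) :=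
        hanti ⟨hT, hα₁.trans hα₂⟩ ⟨hT.trans hα₁, hα₂⟩ hα₁
    _ ≤ _ := LL_add_smul_le_mul_exp hm hℓ hv hvgrad hν fun t ht ↦ by
        simpa only [zero_smul, add_zero] using
          hanti ⟨le_rfl, hT.trans (hα₁.trans hα₂)⟩ ⟨ht.1, ht.2.le.trans (hα₁.trans hα₂)⟩ ht.1

/-- single-step improvement for any step
`ν·γ̂/C⁴ ≤ α ≤ ν·α*`:  `L(A(λ+αv)) ≤ L(Aλ)·exp(−ν(2−ν)γ̂²/(2C⁶))`. -/
theorem single_step_improvement {m n : ℕ} (hm : 0 < m) (hn : 0 < n)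
    (A : Matrix (Fin m) (Fin n) ℝ) (hA : ∀ i j, |A i j| ≤ 1)
    (ℓ : ℝ → ℝ) (hℓ : MemL ℓ)
    (lam : Fin n → ℝ) (s : ℝ) (hs : s = 1 ∨ s = -1) (j : Fin n)
    (v : Fin n → ℝ) (hv : v = s • (Pi.single j (1:ℝ) : Fin n → ℝ))
    (hvgrad : ∑ i, gradL ℓ A lam i * A.mulVec v i = - gInf ℓ A lam)
    (αs : ℝ) (hαs : 0 ≤ αs)
    (hmin : ∀ β : ℝ, LL ℓ A (lam + αs • v) ≤ LL ℓ A (lam + β • v))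
    (ν : ℝ) (hν : ν ∈ Set.Ioc (0:ℝ) 1)
    (α : ℝ)
    (hα₁ : ν * (gammaHat ℓ A lam / (Cstep ℓ A lam)^4) ≤ α)
    (hα₂ : α ≤ ν * αs) :
    LL ℓ A (lam + α • v) ≤
      LL ℓ A lam *
        Real.exp (-(ν * (2-ν) * (gammaHat ℓ A lam)^2 / (2 * (Cstep ℓ A lam)^6))) := by
  subst hv
  have hs' : |s| ≤ 1 := by rcases hs with rfl | rfl <;> simp
  exact single_step_improvement_general hm A ℓ hℓ lam _ (abs_mulVec_smul_single_le hA hs' j)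
    hvgrad.le αs (fun β _ ↦ hmin β) ν hν.1.le α hα₁ (hα₂.trans (mul_le_of_le_one_left hαs hν.2))
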